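/- arXiv:2012.06273 — 5 statements merged into one kernel-verified Lean document; each statement's English description precedes it below -/
import Mathlib

section
/- Let n, m be positive integers, let f : ℝⁿ × ℝᵐ → ℝⁿ be continuously differentiable with f(0,0) = 0, let A ∈ ℝ^{n×n} and B ∈ ℝ^{n×m} be the partial Jacobian matrices of f with respect to x and u at (0,0), and let K ∈ ℝ^{m×n} and T > 0. Fix θ ∈ {0,1} and set c₀ := [1 + T(‖BK‖_∞ + ‖K‖_∞)]·e^{T(‖A‖_∞ + 1)} and c₁ := e^{T(‖A‖_∞ + 1)}. Then there exists d > 0 such that for every x̄ ∈ ℝⁿ with ‖x̄‖_∞ < d, setting ū := (1−θ)Kx̄, every continuous φ : [0,T] → ℝⁿ satisfying φ(t) = x̄ + ∫₀ᵗ f(φ(s), ū) ds for all t ∈ [0,T] obeys ‖φ(t)‖_∞ ≤ c₀‖x̄‖_∞ for all t ∈ [0,T) if θ = 0, and ‖φ(t)‖_∞ ≤ c₁‖x̄‖_∞ for all t ∈ [0,T) if θ = 1. -/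
attribute [local instance] Matrix.linftyOpNormedAddCommGroup

theorem aux_core {n : ℕ} (g : (Fin n → ℝ) → Fin n → ℝ) (hg : Continuous g)
    (L M ρ δ T : ℝ) (hL : 0 < L) (hM : 0 ≤ M) (hδ : 0 < δ) (hT : 0 < T)
    (hρ : δ * ((1 + T * M) * Real.exp (T * L)) < ρ)
    (hb : ∀ x, ‖x‖ < ρ → ‖g x‖ ≤ (L - 1 / 2) * ‖x‖ + M * δ)
    (xBar : Fin n → ℝ) (hx : ‖xBar‖ ≤ δ) (φ : ℝ → Fin n → ℝ)
    (hc : ContinuousOn φ (Set.Icc 0 T))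
    (hφ : ∀ t ∈ Set.Icc (0 : ℝ) T, φ t = xBar + ∫ s in (0 : ℝ)..t, g (φ s)) :
    ∀ t ∈ Set.Icc (0 : ℝ) T, ‖φ t‖ ≤ δ * ((1 + T * M) * Real.exp (T * L)) := by
  set h : ℝ → Fin n → ℝ := fun s => g (Set.IccExtend hT.le (Set.domRestrict (Set.Icc 0 T) φ) s)
    with hh
  have hhc : Continuous h := hg.comp (hc.domRestrict.Icc_extend')
  have hhe : ∀ s ∈ Set.Icc (0 : ℝ) T, h s = g (φ s) := by
    intro s hs
    simp only [hh]
    rw [Set.IccExtend_of_mem _ _ hs]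
    rfl
  set Φ : ℝ → Fin n → ℝ := fun t => xBar + ∫ s in (0 : ℝ)..t, h s with hΦ
  have hΦd : ∀ t, HasDerivAt Φ (h t) t := fun t =>
    (intervalIntegral.integral_hasDerivAt_right (hhc.intervalIntegrable _ _)
      (hhc.stronglyMeasurableAtFilter _ _) hhc.continuousAt).const_add _
  have hΦe : ∀ t ∈ Set.Icc (0 : ℝ) T, Φ t = φ t := by
    intro t ht
    rw [hφ t ht]
    simp only [hΦ]
    congr 1
    apply intervalIntegral.integral_congr
    intro s hs
    rw [Set.uIcc_of_le ht.1] at hs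
    exact hhe s ⟨hs.1, hs.2.trans ht.2⟩
  have hBle : ∀ t ∈ Set.Icc (0 : ℝ) T,
      δ * ((1 + t * M) * Real.exp (t * L)) ≤ δ * ((1 + T * M) * Real.exp (T * L)) := by
    intro t ht
    have h0 := ht.1
    have h1 := ht.2
    gcongr
  intro t ht
  refine le_trans ?_ (hBle t ht)
  rw [← hΦe t ht]
  refine image_norm_le_of_norm_deriv_right_lt_deriv_boundary (f := Φ) (f' := h)
    (B := fun t => δ * ((1 + t * M) * Real.exp (t * L)))
    (B' := fun t => δ * (M * Real.exp (t * L) + (1 + t * M) * (Real.exp (t * L) * L)))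
    (fun s _ => (hΦd s).continuousAt.continuousWithinAt)
    (fun s _ => (hΦd s).hasDerivWithinAt) ?_ ?_ ?_ ht
  · simp [hΦ, hx]
  · intro s
    have h1 : HasDerivAt (fun t : ℝ => 1 + t * M) M s := by
      simpa using ((hasDerivAt_id s).mul_const M).const_add 1
    have h2 : HasDerivAt (fun t : ℝ => Real.exp (t * L)) (Real.exp (s * L) * L) s := by
      simpa using ((hasDerivAt_id s).mul_const L).exp
    exact (h1.mul h2).const_mul δ
  · intro s hs he
    have hs' : s ∈ Set.Icc (0 : ℝ) T := ⟨hs.1, hs.2.le⟩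
    have h1 : ‖Φ s‖ < ρ := by
      rw [he]
      exact (hBle s hs').trans_lt hρ
    have h2 := hb _ h1
    rw [hhe s hs', ← hΦe s hs']
    refine h2.trans_lt ?_
    have h3 : 1 ≤ Real.exp (s * L) := Real.one_le_exp (mul_nonneg hs.1 hL.le)
    have h4 : 0 < ‖Φ s‖ := by
      rw [he]
      have := hs.1
      positivity
    have h5 : M * δ * 1 ≤ M * δ * Real.exp (s * L) := by gcongr
    have h6 : δ * (M * Real.exp (s * L) + (1 + s * M) * (Real.exp (s * L) * L))
      = M * δ * Real.exp (s * L) + L * ‖Φ s‖ := by rw [he]; ring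
    rw [h6]
    linarith

theorem aux_lin (n m : ℕ)
    (f : (Fin n → ℝ) → (Fin m → ℝ) → Fin n → ℝ)
    (hf : ContDiff ℝ 1 (Function.uncurry f))
    (hf0 : f 0 0 = 0)
    (A : Matrix (Fin n) (Fin n) ℝ) (B : Matrix (Fin n) (Fin m) ℝ)
    (hA : ∀ v : Fin n → ℝ, A.mulVec v = fderiv ℝ (fun x => f x 0) 0 v)
    (hB : ∀ w : Fin m → ℝ, B.mulVec w = fderiv ℝ (fun u => f 0 u) 0 w) :
    ∃ ρ > 0, ∀ x u, ‖x‖ < ρ → ‖u‖ < ρ →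
      ‖f x u‖ ≤ (‖A‖ + 1 / 2) * ‖x‖ + (‖B.mulVec u‖ + ‖u‖) := by
  have hd : HasFDerivAt (Function.uncurry f) (fderiv ℝ (Function.uncurry f) (0, 0))
      ((0 : Fin n → ℝ), (0 : Fin m → ℝ)) :=
    ((hf.differentiable (by norm_num)) _).hasFDerivAt
  set D := fderiv ℝ (Function.uncurry f) ((0 : Fin n → ℝ), (0 : Fin m → ℝ)) with hD
  have hDA : ∀ v, A.mulVec v = D (v, 0) := by
    intro v
    have h1 : HasFDerivAt (fun x => f x 0) (D.comp (ContinuousLinearMap.inl ℝ _ _)) 0 :=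
      HasFDerivAt.comp (g := Function.uncurry f) (f := fun x : Fin n → ℝ => (x, (0 : Fin m → ℝ)))
        (0 : Fin n → ℝ) hd (hasFDerivAt_prodMk_left 0 0)
    rw [hA, h1.fderiv]
    simp
  have hDB : ∀ v, B.mulVec v = D (0, v) := by
    intro v
    have h1 : HasFDerivAt (fun x => f 0 x) (D.comp (ContinuousLinearMap.inr ℝ _ _)) 0 :=
      HasFDerivAt.comp (g := Function.uncurry f) (f := fun x : Fin m → ℝ => ((0 : Fin n → ℝ), x))
        (0 : Fin m → ℝ) hd (hasFDerivAt_prodMk_right 0 0)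
    rw [hB, h1.fderiv]
    simp
  have h2 := hd.isLittleO.def (c := 1 / 2) (by norm_num)
  obtain ⟨ρ, hρ, h3⟩ := Metric.eventually_nhds_iff.1 h2
  refine ⟨ρ, hρ, fun x u hx hu => ?_⟩
  have h4 := @h3 (x, u) (by
    rw [Prod.dist_eq]
    simpa using ⟨hx, hu⟩)
  have h5 : D ((x, u) - (0, 0)) = A.mulVec x + B.mulVec u := by
    rw [hDA, hDB, ← map_add]
    simp
  rw [h5] at h4
  simp only [Function.uncurry_apply_pair, hf0, sub_zero, Prod.mk_sub_mk] at h4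
  have h6 : ‖((x, u) : (Fin n → ℝ) × (Fin m → ℝ))‖ ≤ ‖x‖ + ‖u‖ := by
    rw [Prod.norm_def]
    exact max_le_add_of_nonneg (norm_nonneg _) (norm_nonneg _)
  have h7 := Matrix.linfty_opNorm_mulVec A x
  have h8 : ‖f x u‖ ≤ ‖f x u - (A.mulVec x + B.mulVec u)‖ + (‖A.mulVec x‖ + ‖B.mulVec u‖) := by
    calc ‖f x u‖ = ‖(f x u - (A.mulVec x + B.mulVec u)) + (A.mulVec x + B.mulVec u)‖ := by
          rw [sub_add_cancel]
      _ ≤ _ := (norm_add_le _ _).trans (by gcongr; exact norm_add_le _ _)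
  have := norm_nonneg u
  linarith

theorem aux_main (n m : ℕ)
    (f : (Fin n → ℝ) → (Fin m → ℝ) → Fin n → ℝ)
    (hf : ContDiff ℝ 1 (Function.uncurry f))
    (hf0 : f 0 0 = 0)
    (A : Matrix (Fin n) (Fin n) ℝ) (B : Matrix (Fin n) (Fin m) ℝ)
    (hA : ∀ v : Fin n → ℝ, A.mulVec v = fderiv ℝ (fun x => f x 0) 0 v)
    (hB : ∀ w : Fin m → ℝ, B.mulVec w = fderiv ℝ (fun u => f 0 u) 0 w)
    (K : Matrix (Fin m) (Fin n) ℝ) (T : ℝ) (hT : 0 < T)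
    (c : ℝ) (hc0 : 0 ≤ c) :
    ∃ d > 0, ∀ xBar : Fin n → ℝ, ‖xBar‖ < d →
      ∀ φ : ℝ → Fin n → ℝ, ContinuousOn φ (Set.Icc 0 T) →
        (∀ t ∈ Set.Icc (0 : ℝ) T,
          φ t = xBar + ∫ s in (0 : ℝ)..t, f (φ s) (c • K.mulVec xBar)) →
        ∀ t ∈ Set.Icc (0 : ℝ) T,
          ‖φ t‖ ≤
            (1 + T * (c * (‖B * K‖ + ‖K‖))) * Real.exp (T * (‖A‖ + 1)) * ‖xBar‖ := by
  obtain ⟨ρ, hρ, hb⟩ := aux_lin n m f hf hf0 A B hA hB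
  have hKn : 0 ≤ ‖K‖ := norm_nonneg K
  have hBKn : 0 ≤ ‖B * K‖ := norm_nonneg (B * K)
  have hAn : 0 ≤ ‖A‖ := norm_nonneg A
  set M := c * (‖B * K‖ + ‖K‖) with hM
  have hM0 : 0 ≤ M := by positivity
  set C := (1 + T * M) * Real.exp (T * (‖A‖ + 1)) with hC
  have hC0 : 0 < C := by positivity
  refine ⟨ρ / (C + c * ‖K‖ + 1), by positivity, ?_⟩
  intro xBar hx φ hφc hφ t ht
  by_contra hcon
  push Not at hcon
  rw [mul_comm, ← lt_div_iff₀ hC0] at hcon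
  obtain ⟨δ, hδ1, hδ2⟩ := exists_between (lt_min hcon hx)
  have hδ0 : 0 < δ := (norm_nonneg _).trans_lt hδ1
  obtain ⟨hδ3, hδ4⟩ := lt_min_iff.1 hδ2
  rw [lt_div_iff₀ (by positivity)] at hδ3 hδ4
  have hcK : 0 ≤ δ * (c * ‖K‖) := by positivity
  have hδC : 0 < δ * C := by positivity
  have hu : ‖c • K.mulVec xBar‖ ≤ c * ‖K‖ * δ := by
    rw [norm_smul, Real.norm_of_nonneg hc0, mul_assoc]
    gcongr
    exact (Matrix.linfty_opNorm_mulVec K xBar).trans (by gcongr)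
  have hBu : ‖B.mulVec (c • K.mulVec xBar)‖ ≤ c * ‖B * K‖ * δ := by
    rw [Matrix.mulVec_smul, Matrix.mulVec_mulVec, norm_smul, Real.norm_of_nonneg hc0, mul_assoc]
    gcongr
    exact (Matrix.linfty_opNorm_mulVec (B * K) xBar).trans (by gcongr)
  have hcont : Continuous fun x => f x (c • K.mulVec xBar) :=
    hf.continuous.comp (Continuous.prodMk_left (c • K.mulVec xBar))
  have := aux_core (fun x => f x (c • K.mulVec xBar)) hcont (‖A‖ + 1) M ρ δ T (by positivity) hM0
    hδ0 hT (by rw [← hC]; nlinarith) (by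
      intro x hx
      have := hb x (c • K.mulVec xBar) hx (by nlinarith)
      refine this.trans ?_
      rw [hM]
      nlinarith) xBar hδ1.le φ hφc hφ t ht
  rw [← hC] at this
  linarith

/-- inter-sample bound. For the plant `ẋ = f(x,u)` with `f` continuously
differentiable, `f(0,0) = 0`, Jacobians `A`, `B` at the origin, feedback gain `K`,
sampling period `T` and `θ ∈ {0,1}`, there is `d > 0` such that any solution `φ` on
`[0,T]` with constant input `ū = (1−θ)Kx̄` and initial state `‖x̄‖_∞ < d` satisfies
`‖φ(t)‖_∞ ≤ c₀‖x̄‖_∞` (if `θ = 0`) and `‖φ(t)‖_∞ ≤ c₁‖x̄‖_∞` (if `θ = 1`) for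
`t ∈ [0,T)`, where `c₀ = (1 + T(‖BK‖_∞ + ‖K‖_∞))·e^{T(‖A‖_∞+1)}` and
`c₁ = e^{T(‖A‖_∞+1)}`. Vectors carry the `∞`-norm and matrices the induced
`∞`-operator norm. -/
theorem stmt0 (n m : ℕ) (hn : 0 < n) (hm : 0 < m)
    (f : (Fin n → ℝ) → (Fin m → ℝ) → Fin n → ℝ)
    (hf : ContDiff ℝ 1 (Function.uncurry f))
    (hf0 : f 0 0 = 0)
    (A : Matrix (Fin n) (Fin n) ℝ) (B : Matrix (Fin n) (Fin m) ℝ)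
    (hA : ∀ v : Fin n → ℝ, A.mulVec v = fderiv ℝ (fun x => f x 0) 0 v)
    (hB : ∀ w : Fin m → ℝ, B.mulVec w = fderiv ℝ (fun u => f 0 u) 0 w)
    (K : Matrix (Fin m) (Fin n) ℝ) (T : ℝ) (hT : 0 < T)
    (θ : ℝ) (hθ : θ = 0 ∨ θ = 1) :
    ∃ d > 0, ∀ xBar : Fin n → ℝ, ‖xBar‖ < d →
      ∀ φ : ℝ → Fin n → ℝ, ContinuousOn φ (Set.Icc 0 T) →
        (∀ t ∈ Set.Icc (0 : ℝ) T,
          φ t = xBar + ∫ s in (0 : ℝ)..t, f (φ s) ((1 - θ) • K.mulVec xBar)) →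
        ∀ t ∈ Set.Ico (0 : ℝ) T,
          (θ = 0 → ‖φ t‖ ≤
            (1 + T * (‖B * K‖ + ‖K‖)) * Real.exp (T * (‖A‖ + 1)) * ‖xBar‖) ∧
          (θ = 1 → ‖φ t‖ ≤ Real.exp (T * (‖A‖ + 1)) * ‖xBar‖) := by
  obtain ⟨d, hd, h⟩ := aux_main n m f hf hf0 A B hA hB K T hT (1 - θ)
    (by rcases hθ with h | h <;> rw [h] <;> norm_num)
  refine ⟨d, hd, fun xBar hx φ hc hφ t ht => ?_⟩
  have h1 := h xBar hx φ hc hφ t ⟨ht.1, ht.2.le⟩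
  constructor
  · intro h0
    rw [h0] at h1
    simpa using h1
  · intro h0
    rw [h0] at h1
    simpa using h1
end

section
/- Let θ : ℕ → {0,1} with θ(0) = 0, let μ₀, μ₁ ≥ 1 and ω₀, ω₁ > 0, and let W : ℕ → ℝ be a nonnegative sequence such that for every k ∈ ℕ: W(k+1) ≤ ω_{θ(k)}·W(k) whenever θ(k+1) = θ(k), and W(k+1) ≤ μ_{θ(k)}·ω_{θ(k)}·W(k) whenever θ(k+1) ≠ θ(k). Then for every k ∈ ℕ, W(k) ≤ (μ₀μ₁)^{S(k)} · ω₀^{k−χ(k)} · ω₁^{χ(k)} · W(0), where χ(k) := #{j < k : θ(j) = 1} and S(k) := #{j < k : θ(j) = 0 and θ(j+1) = 1}. -/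
/-- `χ(k)`: the number of indices `j < k` with `θ j = 1` (packet-loss steps). -/
def lossCount (θ : ℕ → ℕ) (k : ℕ) : ℕ :=
  ((Finset.range k).filter fun j => θ j = 1).card

/-- `S(k)`: the number of indices `j < k` with `θ j = 0` and `θ (j+1) = 1`
(switches from the nominal mode to the packet-loss mode). -/
def switchCount (θ : ℕ → ℕ) (k : ℕ) : ℕ :=
  ((Finset.range k).filter fun j => θ j = 0 ∧ θ (j + 1) = 1).card

/-- growth bound for the switched Lyapunov-like sequence. -/
theorem stmt2 (θ : ℕ → ℕ) (hθ : ∀ k, θ k = 0 ∨ θ k = 1) (hθ0 : θ 0 = 0)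
    (μ₀ μ₁ ω₀ ω₁ : ℝ) (hμ₀ : 1 ≤ μ₀) (hμ₁ : 1 ≤ μ₁) (hω₀ : 0 < ω₀) (hω₁ : 0 < ω₁)
    (W : ℕ → ℝ) (hWnonneg : ∀ k, 0 ≤ W k)
    (hrec_same : ∀ k, θ (k + 1) = θ k →
      W (k + 1) ≤ (if θ k = 0 then ω₀ else ω₁) * W k)
    (hrec_switch : ∀ k, θ (k + 1) ≠ θ k →
      W (k + 1) ≤ (if θ k = 0 then μ₀ else μ₁) * (if θ k = 0 then ω₀ else ω₁) * W k) :
    ∀ k : ℕ, W k ≤ (μ₀ * μ₁) ^ switchCount θ k *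
      ω₀ ^ (k - lossCount θ k) * ω₁ ^ lossCount θ k * W 0 := by
  have hχle : ∀ k, lossCount θ k ≤ k := fun k => by
    have := Finset.card_filter_le (Finset.range k) (fun j => θ j = 1)
    simpa [lossCount] using this
  have hχ : ∀ k, lossCount θ (k + 1) = lossCount θ k + if θ k = 1 then 1 else 0 := fun k => by
    unfold lossCount
    rw [Finset.range_add_one, Finset.filter_insert]
    split_ifs <;> simp
  have hS : ∀ k, switchCount θ (k + 1) =
      switchCount θ k + if θ k = 0 ∧ θ (k + 1) = 1 then 1 else 0 := fun k => by
    unfold switchCount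
    rw [Finset.range_add_one, Finset.filter_insert]
    split_ifs <;> simp
  have key : ∀ k, (if θ k = 1 then μ₁ else 1) * W k ≤ (μ₀ * μ₁) ^ switchCount θ k *
      ω₀ ^ (k - lossCount θ k) * ω₁ ^ lossCount θ k * W 0 := by
    intro k
    induction k with
    | zero => simp [hθ0, lossCount, switchCount]
    | succ k ih =>
      have h1 := hrec_same k
      have h2 := hrec_switch k
      have hc := hχ k
      have hs := hS k
      have hle := hχle k
      have e : k + 1 - lossCount θ k = (k - lossCount θ k) + 1 := by omega
      have hμ₁p : 0 ≤ μ₁ := by linarith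
      have hμ₀p : 0 ≤ μ₀ := by linarith
      rcases hθ k with h | h <;> rcases hθ (k + 1) with h' | h' <;>
        simp only [h, h', if_true, and_self, and_true, and_false, false_and, zero_ne_one,
          one_ne_zero, if_false, ne_eq, not_true_eq_false, not_false_eq_true, forall_true_left,
          add_zero, one_mul, true_imp_iff] at h1 h2 hc hs ih ⊢ <;>
        rw [hc, hs]
      · rw [e, pow_succ]
        have := mul_le_mul_of_nonneg_left ih hω₀.le
        linarith
      · rw [e, pow_succ, pow_succ]
        have := mul_le_mul_of_nonneg_left ih (mul_nonneg (mul_nonneg hμ₀p hμ₁p) hω₀.le)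
        have := mul_le_mul_of_nonneg_left h2 hμ₁p
        linarith
      · rw [Nat.add_sub_add_right, pow_succ]
        have := mul_le_mul_of_nonneg_left ih hω₁.le
        linarith
      · rw [Nat.add_sub_add_right, pow_succ]
        have := mul_le_mul_of_nonneg_left ih hω₁.le
        have := mul_le_mul_of_nonneg_left h1 hμ₁p
        linarith
  intro k
  refine le_trans ?_ (key k)
  split_ifs
  · exact le_mul_of_one_le_left (hWnonneg k) hμ₁
  · simp
end

section
/- Let θ : ℕ → {0,1} with θ(0) = 0, let μ₀, μ₁ ≥ 1, 0 < ω₀ < 1 ≤ ω₁, T > 0, and κ_F, ρ_F, κ*, ρ* ≥ 0, and let W : ℕ → ℝ be a nonnegative sequence such that for every k ∈ ℕ: W(k+1) ≤ ω_{θ(k)}·W(k) whenever θ(k+1) = θ(k), and W(k+1) ≤ μ_{θ(k)}·ω_{θ(k)}·W(k) whenever θ(k+1) ≠ θ(k). Suppose that for all k ∈ ℕ, S(k) ≤ κ_F + ρ_F·kT and χ(k) ≤ (κ* + ρ*·kT)/T, where χ(k) := #{j < k : θ(j) = 1} and S(k) := #{j < k : θ(j) = 0 and θ(j+1) = 1}.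 Then for all k ∈ ℕ, W(k) ≤ c_W · ω^k · W(0), where c_W := (μ₀μ₁)^{κ_F}·(ω₁/ω₀)^{κ*/T} and ω := (μ₀μ₁)^{ρ_F T}·ω₀^{1−ρ*}·ω₁^{ρ*} (real powers). -/
theorem lossCount_succ_aux (θ : ℕ → ℕ) (k : ℕ) :
    lossCount θ (k + 1) = lossCount θ k + if θ k = 1 then 1 else 0 := by
  unfold lossCount
  rw [Finset.range_add_one, Finset.filter_insert]
  split_ifs <;> simp

theorem switchCount_succ_aux (θ : ℕ → ℕ) (k : ℕ) :
    switchCount θ (k + 1) = switchCount θ k + if θ k = 0 ∧ θ (k + 1) = 1 then 1 else 0 := by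
  unfold switchCount
  rw [Finset.range_add_one, Finset.filter_insert]
  split_ifs <;> simp

/-- geometric bound for the switched Lyapunov-like sequence under
averagely constrained DoS attacks. -/
theorem stmt3 (θ : ℕ → ℕ) (hθ : ∀ k, θ k = 0 ∨ θ k = 1) (hθ0 : θ 0 = 0)
    (μ₀ μ₁ ω₀ ω₁ T κF ρF κs ρs : ℝ)
    (hμ₀ : 1 ≤ μ₀) (hμ₁ : 1 ≤ μ₁) (hω₀ : 0 < ω₀) (hω₀1 : ω₀ < 1) (hω₁ : 1 ≤ ω₁)
    (hT : 0 < T) (hκF : 0 ≤ κF) (hρF : 0 ≤ ρF) (hκs : 0 ≤ κs) (hρs : 0 ≤ ρs)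
    (W : ℕ → ℝ) (hWnonneg : ∀ k, 0 ≤ W k)
    (hrec_same : ∀ k, θ (k + 1) = θ k →
      W (k + 1) ≤ (if θ k = 0 then ω₀ else ω₁) * W k)
    (hrec_switch : ∀ k, θ (k + 1) ≠ θ k →
      W (k + 1) ≤ (if θ k = 0 then μ₀ else μ₁) * (if θ k = 0 then ω₀ else ω₁) * W k)
    (hS : ∀ k : ℕ, (switchCount θ k : ℝ) ≤ κF + ρF * (k * T))
    (hχ : ∀ k : ℕ, (lossCount θ k : ℝ) ≤ (κs + ρs * (k * T)) / T) :
    ∀ k : ℕ, W k ≤ ((μ₀ * μ₁) ^ κF * (ω₁ / ω₀) ^ (κs / T)) *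
      ((μ₀ * μ₁) ^ (ρF * T) * ω₀ ^ (1 - ρs) * ω₁ ^ ρs) ^ k * W 0 := by
  have hm0 : 0 < μ₀ := by linarith
  have hm1 : 0 < μ₁ := by linarith
  have hw1 : 0 < ω₁ := by linarith
  have hm : 1 ≤ μ₀ * μ₁ := one_le_mul_of_one_le_of_one_le hμ₀ hμ₁
  have hmp : 0 < μ₀ * μ₁ := by positivity
  have hr : 1 ≤ ω₁ / ω₀ := by rw [le_div_iff₀ hω₀]; linarith
  have hrp : 0 < ω₁ / ω₀ := by positivity
  have key : ∀ k : ℕ, (if θ k = 1 then μ₁ else 1) * W k ≤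
      (μ₀ * μ₁) ^ switchCount θ k * ω₀ ^ k * (ω₁ / ω₀) ^ lossCount θ k * W 0 := by
    intro k
    induction k with
    | zero => simp [hθ0, switchCount, lossCount]
    | succ k ih =>
      rw [lossCount_succ_aux, switchCount_succ_aux]
      have h1 := hrec_same k
      have h2 := hrec_switch k
      set B := (μ₀ * μ₁) ^ switchCount θ k with hB
      set R := (ω₁ / ω₀) ^ lossCount θ k with hR
      rcases hθ k with h | h <;> rcases hθ (k + 1) with h' | h' <;>
        simp [h, h'] at h1 h2 ih ⊢
      · calc W (k + 1) ≤ ω₀ * W k := h1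
          _ ≤ ω₀ * (B * ω₀ ^ k * R * W 0) := by gcongr
          _ = _ := by ring
      · calc μ₁ * W (k + 1) ≤ μ₁ * (μ₀ * ω₀ * W k) := by gcongr
          _ ≤ μ₁ * (μ₀ * ω₀ * (B * ω₀ ^ k * R * W 0)) := by gcongr
          _ = _ := by rw [pow_succ, pow_succ, ← hB]; ring
      · calc W (k + 1) ≤ μ₁ * ω₁ * W k := h2
          _ = ω₁ * (μ₁ * W k) := by ring
          _ ≤ ω₁ * (B * ω₀ ^ k * R * W 0) := by gcongr
          _ = _ := by rw [pow_succ, pow_succ, ← hR]; field_simp; rw [hB]; ring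
      · calc μ₁ * W (k + 1) ≤ μ₁ * (ω₁ * W k) := by gcongr
          _ = ω₁ * (μ₁ * W k) := by ring
          _ ≤ ω₁ * (B * ω₀ ^ k * R * W 0) := by gcongr
          _ = _ := by rw [pow_succ, pow_succ, ← hR]; field_simp; rw [hB]; ring
  intro k
  have hW0 := hWnonneg 0
  have hWk := hWnonneg k
  have hS' : (μ₀ * μ₁) ^ switchCount θ k ≤ (μ₀ * μ₁) ^ (κF + ρF * (k * T)) := by
    rw [← Real.rpow_natCast]
    exact Real.rpow_le_rpow_of_exponent_le hm (hS k)
  have hL' : (ω₁ / ω₀) ^ lossCount θ k ≤ (ω₁ / ω₀) ^ ((κs + ρs * (k * T)) / T) := by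
    rw [← Real.rpow_natCast]
    exact Real.rpow_le_rpow_of_exponent_le hr (hχ k)
  have hexp : (κs + ρs * (k * T)) / T = κs / T + ρs * k := by field_simp
  have e1 : (μ₀ * μ₁) ^ (κF + ρF * (k * T)) = (μ₀ * μ₁) ^ κF * ((μ₀ * μ₁) ^ (ρF * T)) ^ k := by
    rw [Real.rpow_add hmp, ← Real.rpow_mul_natCast hmp.le]
    ring_nf
  have e2 : (ω₁ / ω₀) ^ ((κs + ρs * (k * T)) / T) =
      (ω₁ / ω₀) ^ (κs / T) * ((ω₁ / ω₀) ^ ρs) ^ k := by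
    rw [hexp, Real.rpow_add hrp, ← Real.rpow_mul_natCast hrp.le]
  have e3 : ω₀ * (ω₁ / ω₀) ^ ρs = ω₀ ^ (1 - ρs) * ω₁ ^ ρs := by
    rw [Real.div_rpow hw1.le hω₀.le, Real.rpow_sub hω₀, Real.rpow_one]
    ring
  calc W k ≤ (if θ k = 1 then μ₁ else 1) * W k := by
        split_ifs
        · nlinarith
        · linarith
    _ ≤ _ := key k
    _ ≤ (μ₀ * μ₁) ^ (κF + ρF * (k * T)) * ω₀ ^ k *
        (ω₁ / ω₀) ^ ((κs + ρs * (k * T)) / T) * W 0 := by gcongr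
    _ = _ := by
        rw [e1, e2, mul_assoc ((μ₀ * μ₁) ^ (ρF * T)), ← e3, mul_pow, mul_pow]
        ring
end

section
/- Let θ : ℕ → {0,1} with θ(0) = 0, let μ₀, μ₁ ≥ 1, 0 < ω₀ < 1 ≤ ω₁, T > 0, κ_F, ρ_F, κ*, ρ* ≥ 0, and 0 < α ≤ β, and let W : ℕ → ℝ and s : ℕ → ℝ be sequences with s(k) ≥ 0 and α·s(k)² ≤ W(k) ≤ β·s(k)² for all k. Suppose the recursion W(k+1) ≤ ω_{θ(k)}·W(k) (if θ(k+1) = θ(k)) and W(k+1) ≤ μ_{θ(k)}·ω_{θ(k)}·W(k) (if θ(k+1) ≠ θ(k)) holds for all k, and that S(k) ≤ κ_F + ρ_F·kT and χ(k) ≤ (κ* + ρ*·kT)/T for all k, where χ(k) := #{j < k : θ(j) = 1} and S(k) := #{j < k : θ(j) = 0 and θ(j+1) = 1}. If ω := (μ₀μ₁)^{ρ_F T}·ω₀^{1−ρ*}·ω₁^{ρ*} < 1 and c_W := (μ₀μ₁)^{κ_F}·(ω₁/ω₀)^{κ*/T}, then s(k) ≤ √(β·c_W/α)·ω^{k/2}·s(0)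 for all k, and in particular s(k) → 0 as k → ∞. -/
/-- asymptotic stability estimate under DoS attacks: the state bound
`s k` decays geometrically and tends to zero. -/
theorem stmt4 (θ : ℕ → ℕ) (hθ : ∀ k, θ k = 0 ∨ θ k = 1) (hθ0 : θ 0 = 0)
    (μ₀ μ₁ ω₀ ω₁ T κF ρF κs ρs α β : ℝ)
    (hμ₀ : 1 ≤ μ₀) (hμ₁ : 1 ≤ μ₁) (hω₀ : 0 < ω₀) (hω₀1 : ω₀ < 1) (hω₁ : 1 ≤ ω₁)
    (hT : 0 < T) (hκF : 0 ≤ κF) (hρF : 0 ≤ ρF) (hκs : 0 ≤ κs) (hρs : 0 ≤ ρs)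
    (hα : 0 < α) (hαβ : α ≤ β)
    (W s : ℕ → ℝ) (hs : ∀ k, 0 ≤ s k)
    (hWlow : ∀ k, α * s k ^ 2 ≤ W k) (hWhigh : ∀ k, W k ≤ β * s k ^ 2)
    (hrec_same : ∀ k, θ (k + 1) = θ k →
      W (k + 1) ≤ (if θ k = 0 then ω₀ else ω₁) * W k)
    (hrec_switch : ∀ k, θ (k + 1) ≠ θ k →
      W (k + 1) ≤ (if θ k = 0 then μ₀ else μ₁) * (if θ k = 0 then ω₀ else ω₁) * W k)
    (hS : ∀ k : ℕ, (switchCount θ k : ℝ) ≤ κF + ρF * (k * T))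
    (hχ : ∀ k : ℕ, (lossCount θ k : ℝ) ≤ (κs + ρs * (k * T)) / T)
    (hω : (μ₀ * μ₁) ^ (ρF * T) * ω₀ ^ (1 - ρs) * ω₁ ^ ρs < 1) :
    (∀ k : ℕ, s k ≤
      Real.sqrt (β * ((μ₀ * μ₁) ^ κF * (ω₁ / ω₀) ^ (κs / T)) / α) *
        ((μ₀ * μ₁) ^ (ρF * T) * ω₀ ^ (1 - ρs) * ω₁ ^ ρs) ^ ((k : ℝ) / 2) * s 0) ∧
    Filter.Tendsto s Filter.atTop (nhds 0) := by
  have hM : 1 ≤ μ₀ * μ₁ := one_le_mul_of_one_le_of_one_le hμ₀ hμ₁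
  have hM0 : 0 < μ₀ * μ₁ := by linarith
  have hω₁0 : 0 < ω₁ := by linarith
  have hβ : 0 < β := by linarith
  have hr : 1 ≤ ω₁ / ω₀ := by rw [le_div_iff₀ hω₀]; linarith
  have hr0 : 0 < ω₁ / ω₀ := by positivity
  have hWnn : ∀ k, 0 ≤ W k := fun k => le_trans (by positivity) (hWlow k)
  have hSs : ∀ k, switchCount θ (k+1) =
      switchCount θ k + if (θ k = 0 ∧ θ (k+1) = 1) then 1 else 0 := by
    intro k
    unfold switchCount
    rw [Finset.range_add_one, Finset.filter_insert]
    split_ifs <;> simp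
  have hχs : ∀ k, lossCount θ (k+1) = lossCount θ k + if θ k = 1 then 1 else 0 := by
    intro k
    unfold lossCount
    rw [Finset.range_add_one, Finset.filter_insert]
    split_ifs <;> simp
  have key : ∀ k, (if θ k = 0 then 1 else μ₁) * W k ≤
      (μ₀ * μ₁) ^ switchCount θ k * ω₀ ^ k * (ω₁ / ω₀) ^ lossCount θ k * W 0 := by
    intro k
    induction k with
    | zero => simp [hθ0, switchCount, lossCount]
    | succ k ih =>
      rw [hSs, hχs]
      have h1 := hrec_same k
      have h2 := hrec_switch k
      generalize hB : (μ₀ * μ₁) ^ switchCount θ k * ω₀ ^ k *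
        (ω₁ / ω₀) ^ lossCount θ k * W 0 = B at ih
      have e1 : (μ₀ * μ₁) ^ switchCount θ k * ω₀ ^ (k+1) *
        (ω₁ / ω₀) ^ lossCount θ k * W 0 = ω₀ * B := by rw [← hB]; ring
      have e2 : (μ₀ * μ₁) ^ (switchCount θ k + 1) * ω₀ ^ (k+1) *
        (ω₁ / ω₀) ^ lossCount θ k * W 0 = μ₀ * μ₁ * ω₀ * B := by rw [← hB]; ring
      have e3 : (μ₀ * μ₁) ^ switchCount θ k * ω₀ ^ (k+1) *
        (ω₁ / ω₀) ^ (lossCount θ k + 1) * W 0 = ω₁ * B := by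
        rw [← hB, pow_succ, pow_succ]; field_simp
      rcases hθ k with h | h <;> rcases hθ (k+1) with h' | h' <;> simp [h, h'] at h1 h2 ih ⊢
      · rw [e1]; exact h1.trans (by gcongr)
      · rw [e2]
        calc μ₁ * W (k+1) ≤ μ₁ * (μ₀ * ω₀ * W k) := by gcongr
          _ = μ₀ * μ₁ * ω₀ * W k := by ring
          _ ≤ _ := by gcongr
      · rw [e3]
        calc W (k+1) ≤ μ₁ * ω₁ * W k := h2
          _ = ω₁ * (μ₁ * W k) := by ring
          _ ≤ _ := by gcongr
      · rw [e3]
        calc μ₁ * W (k+1) ≤ μ₁ * (ω₁ * W k) := by gcongr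
          _ = ω₁ * (μ₁ * W k) := by ring
          _ ≤ _ := by gcongr
  have key2 : ∀ k, W k ≤
      (μ₀ * μ₁) ^ switchCount θ k * ω₀ ^ k * (ω₁ / ω₀) ^ lossCount θ k * W 0 := by
    intro k
    refine le_trans ?_ (key k)
    apply le_mul_of_one_le_left (hWnn k)
    split_ifs <;> linarith
  set ω := (μ₀ * μ₁) ^ (ρF * T) * ω₀ ^ (1 - ρs) * ω₁ ^ ρs with hωdef
  set c := (μ₀ * μ₁) ^ κF * (ω₁ / ω₀) ^ (κs / T) with hc
  have hωpos : 0 < ω := by positivity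
  have hcpos : 0 < c := by positivity
  have key3 : ∀ k : ℕ, (μ₀ * μ₁) ^ switchCount θ k * ω₀ ^ k * (ω₁ / ω₀) ^ lossCount θ k
      ≤ c * ω ^ k := by
    intro k
    have a1 : (μ₀ * μ₁) ^ switchCount θ k ≤ (μ₀ * μ₁) ^ κF * ((μ₀ * μ₁) ^ (ρF * T)) ^ k := by
      rw [← Real.rpow_natCast, ← Real.rpow_natCast, ← Real.rpow_mul hM0.le,
        ← Real.rpow_add hM0]
      apply Real.rpow_le_rpow_of_exponent_le hM
      have := hS k
      linarith
    have a2 : (ω₁ / ω₀) ^ lossCount θ k ≤ (ω₁ / ω₀) ^ (κs / T) * ((ω₁ / ω₀) ^ ρs) ^ k := by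
      rw [← Real.rpow_natCast, ← Real.rpow_natCast, ← Real.rpow_mul hr0.le,
        ← Real.rpow_add hr0]
      apply Real.rpow_le_rpow_of_exponent_le hr
      refine (hχ k).trans (le_of_eq ?_)
      field_simp
    have e : ω = (μ₀ * μ₁) ^ (ρF * T) * ω₀ * (ω₁ / ω₀) ^ ρs := by
      rw [hωdef, Real.rpow_sub hω₀, Real.div_rpow hω₁0.le hω₀.le, Real.rpow_one]
      field_simp
    calc _ ≤ ((μ₀ * μ₁) ^ κF * ((μ₀ * μ₁) ^ (ρF * T)) ^ k) * ω₀ ^ k *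
          ((ω₁ / ω₀) ^ (κs / T) * ((ω₁ / ω₀) ^ ρs) ^ k) := by gcongr
      _ = c * ω ^ k := by rw [e, hc, mul_pow, mul_pow]; ring
  have main : ∀ k : ℕ, s k ≤ Real.sqrt (β * c / α) * ω ^ ((k : ℝ) / 2) * s 0 := by
    intro k
    refine (abs_le_of_sq_le_sq' ?_ (mul_nonneg (by positivity) (hs 0))).2
    have e : (ω ^ ((k : ℝ) / 2)) ^ 2 = ω ^ k := by
      rw [← Real.rpow_natCast, ← Real.rpow_mul hωpos.le, ← Real.rpow_natCast]
      congr 1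
      push_cast
      ring
    rw [mul_pow, mul_pow, e, Real.sq_sqrt (by positivity)]
    have : α * s k ^ 2 ≤ c * ω ^ k * (β * s 0 ^ 2) :=
      calc α * s k ^ 2 ≤ W k := hWlow k
        _ ≤ _ := key2 k
        _ ≤ c * ω ^ k * W 0 := mul_le_mul_of_nonneg_right (key3 k) (hWnn 0)
        _ ≤ _ := by gcongr; exact hWhigh 0
    have e2 : β * c / α * ω ^ k * s 0 ^ 2 = (c * ω ^ k * (β * s 0 ^ 2)) / α := by ring
    rw [e2, le_div_iff₀ hα]
    linarith
  refine ⟨main, ?_⟩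
  have hq : ∀ k : ℕ, ω ^ ((k : ℝ) / 2) = (ω ^ ((1 : ℝ) / 2)) ^ k := by
    intro k
    rw [← Real.rpow_natCast, ← Real.rpow_mul hωpos.le]
    congr 1
    ring
  have ht : Filter.Tendsto (fun k : ℕ => Real.sqrt (β * c / α) * ω ^ ((k : ℝ) / 2) * s 0)
      Filter.atTop (nhds 0) := by
    simp_rw [hq]
    have := tendsto_pow_atTop_nhds_zero_of_lt_one (r := ω ^ ((1 : ℝ) / 2)) (by positivity)
      (Real.rpow_lt_one hωpos.le hω (by norm_num))
    simpa using (this.const_mul (Real.sqrt (β * c / α))).mul_const (s 0)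
  exact squeeze_zero hs main ht
end

section
/- Let (a_i)_{i∈ℕ} and (τ_i)_{i∈ℕ} be sequences of nonnegative reals, and for t ≥ 0 define A(t) := (⋃_{i∈ℕ} [a_i, a_i + τ_i]) ∩ [0,t] and N(t) := #{i ∈ ℕ : a_i ≤ t} (assumed finite for every t). Let T > 0 and let κ_F, ρ_F, κ_D, ρ_D ≥ 0 be constants such that N(t) ≤ κ_F + ρ_F·t and |A(t)| ≤ κ_D + ρ_D·t for all t ≥ 0, where |A(t)| denotes the Lebesgue measure of A(t). Then for every t ≥ 0, the number of indices k ∈ ℕ with kT ∈ A(t) is at most (κ_D + κ_F·T + (ρ_D + ρ_F·T)·t)/T. -/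
open MeasureTheory

/-- bound on the number of sampling times `kT` that fall inside the
DoS-attack set `A(t) = (⋃ i, [aᵢ, aᵢ + τᵢ]) ∩ [0, t]`, under the DoS frequency
assumption `N(t) ≤ κ_F + ρ_F t` and the DoS duration assumption
`|A(t)| ≤ κ_D + ρ_D t`. -/
theorem stmt8 (a τ : ℕ → ℝ) (ha : ∀ i, 0 ≤ a i) (hτ : ∀ i, 0 ≤ τ i)
    (T : ℝ) (hT : 0 < T) (κF ρF κD ρD : ℝ)
    (hκF : 0 ≤ κF) (hρF : 0 ≤ ρF) (hκD : 0 ≤ κD) (hρD : 0 ≤ ρD)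
    (hfin : ∀ t : ℝ, {i : ℕ | a i ≤ t}.Finite)
    (hfreq : ∀ t : ℝ, 0 ≤ t → ({i : ℕ | a i ≤ t}.ncard : ℝ) ≤ κF + ρF * t)
    (hdur : ∀ t : ℝ, 0 ≤ t →
      (volume ((⋃ i : ℕ, Set.Icc (a i) (a i + τ i)) ∩ Set.Icc 0 t)).toReal
        ≤ κD + ρD * t) :
    ∀ t : ℝ, 0 ≤ t →
      ({k : ℕ | (k : ℝ) * T ∈ (⋃ i : ℕ, Set.Icc (a i) (a i + τ i)) ∩ Set.Icc 0 t}.ncard : ℝ)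
        ≤ (κD + κF * T + (ρD + ρF * T) * t) / T := by
  classical
  intro t ht
  set U := ⋃ i : ℕ, Set.Icc (a i) (a i + τ i) with hU
  set S := {k : ℕ | (k : ℝ) * T ∈ U ∩ Set.Icc 0 t} with hS
  have hSfin : S.Finite := by
    refine (Set.finite_Iic ⌊t / T⌋₊).subset ?_
    intro k hk
    have h : (k : ℝ) * T ≤ t := hk.2.2
    exact Nat.le_floor ((le_div_iff₀ hT).2 h)
  have hex : ∀ k : ℕ, ∃ i : ℕ, k ∈ S → a i ≤ k * T ∧ (k : ℝ) * T ≤ a i + τ i := by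
    intro k
    by_cases hk : k ∈ S
    · obtain ⟨i, hi⟩ := Set.mem_iUnion.1 hk.1
      exact ⟨i, fun _ => ⟨hi.1, hi.2⟩⟩
    · exact ⟨0, fun h => absurd h hk⟩
  choose f hf using hex
  set F := hSfin.toFinset with hF
  have hmem : ∀ k, k ∈ F ↔ k ∈ S := fun k => hSfin.mem_toFinset
  set G := F.filter (fun k : ℕ => a (f k) ≤ ((k : ℝ) - 1) * T) with hG
  set B := F.filter (fun k : ℕ => ¬ a (f k) ≤ ((k : ℝ) - 1) * T) with hB
  have hcard : S.ncard = G.card + B.card := by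
    rw [Set.ncard_eq_toFinset_card S hSfin, hG, hB, Finset.card_filter_add_card_filter_not]
  have key : ∀ k l : ℕ, k < l → (k : ℝ) * T ≤ ((l : ℝ) - 1) * T := by
    intro k l h
    have h1 : (k : ℝ) + 1 ≤ l := by exact_mod_cast h
    exact mul_le_mul_of_nonneg_right (by linarith) hT.le
  have hBc : B.card ≤ {i : ℕ | a i ≤ t}.ncard := by
    rw [Set.ncard_eq_toFinset_card _ (hfin t)]
    refine Finset.card_le_card_of_injOn f ?_ ?_
    · intro k hk
      have hk' := (hmem k).1 (Finset.mem_filter.1 hk).1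
      have h1 := (hf k hk').1
      have h2 : (k : ℝ) * T ≤ t := hk'.2.2
      have h3 : a (f k) ≤ t := h1.trans h2
      simpa using h3
    · intro k hk l hl hkl
      have hk1 := Finset.mem_filter.1 hk
      have hl1 := Finset.mem_filter.1 hl
      have hk2 := (hf k ((hmem k).1 hk1.1)).1
      have hl2 := (hf l ((hmem l).1 hl1.1)).1
      have hk3 := not_le.1 hk1.2
      have hl3 := not_le.1 hl1.2
      have e : a (f k) = a (f l) := by rw [hkl]
      rcases lt_trichotomy k l with h | h | h
      · have := key k l h
        linarith
      · exact h
      · have := key l k h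
        linarith
  have hGc : (G.card : ℝ) * T ≤ (volume (U ∩ Set.Icc 0 t)).toReal := by
    have hsub : (⋃ k ∈ G, Set.Ioc (((k : ℝ) - 1) * T) ((k : ℝ) * T)) ⊆ U ∩ Set.Icc 0 t := by
      intro x hx
      simp only [Set.mem_iUnion] at hx
      obtain ⟨k, hk, hx1, hx2⟩ := hx
      have hk1 := Finset.mem_filter.1 hk
      have hk' := (hmem k).1 hk1.1
      have hk2 := hf k hk'
      have hk3 : (k : ℝ) * T ≤ t := hk'.2.2
      have h0 := ha (f k)
      refine ⟨Set.mem_iUnion.2 ⟨f k, ?_, ?_⟩, ?_, ?_⟩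
      · linarith [hk1.2]
      · linarith [hk2.2]
      · linarith [hk1.2]
      · linarith
    have hvol : volume (⋃ k ∈ G, Set.Ioc (((k : ℝ) - 1) * T) ((k : ℝ) * T))
        = ENNReal.ofReal (G.card * T) := by
      rw [measure_biUnion_finset]
      · have : ∀ k ∈ G, volume (Set.Ioc (((k : ℝ) - 1) * T) ((k : ℝ) * T))
            = ENNReal.ofReal T := by
          intro k _
          rw [Real.volume_Ioc]
          congr 1
          ring
        rw [Finset.sum_congr rfl this, Finset.sum_const, nsmul_eq_mul,
          ENNReal.ofReal_mul (Nat.cast_nonneg _), ENNReal.ofReal_natCast]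
      · intro k _ l _ hkl
        refine Set.disjoint_left.2 ?_
        intro x hx hy
        rcases lt_or_gt_of_ne hkl with h | h
        · linarith [key k l h, hx.2, hy.1]
        · linarith [key l k h, hy.2, hx.1]
      · intro k _
        exact measurableSet_Ioc
    have hne : volume (U ∩ Set.Icc 0 t) ≠ ⊤ :=
      ((measure_mono Set.inter_subset_right).trans_lt measure_Icc_lt_top).ne
    have := ENNReal.toReal_mono hne (measure_mono hsub)
    rwa [hvol, ENNReal.toReal_ofReal (by positivity)] at this
  have h1 := hdur t ht
  have h2 := hfreq t ht
  have h3 : (B.card : ℝ) ≤ ({i : ℕ | a i ≤ t}.ncard : ℝ) := by exact_mod_cast hBc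
  rw [le_div_iff₀ hT, hcard]
  push_cast
  have h4 : (B.card : ℝ) * T ≤ (κF + ρF * t) * T :=
    mul_le_mul_of_nonneg_right (h3.trans h2) hT.le
  have h5 := hGc.trans h1
  linarith
end
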